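/- Let f : (ℂⁿ,0) → (ℂⁿ⁺¹,0) be a finite holomorphic map germ with mult f = gd(f). Then the tangent cone C(f(ℂⁿ),0) of the image at the origin is an n-dimensional linear subspace (a hyperplane) of ℂⁿ⁺¹. -/

import Mathlib

open Filter Topology Set

noncomputable section

/-- `ℂⁿ` with its Euclidean (Hermitian) norm. -/
abbrev Cn (n : ℕ) : Type := EuclideanSpace ℂ (Fin n)

instance germAlgebra {α : Type*} (l : Filter α) : Algebra ℂ (Filter.Germ l ℂ) :=
  Algebra.ofModule
    (fun r x y => by
      induction x using Filter.Germ.inductionOn with | _ f =>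
      induction y using Filter.Germ.inductionOn with | _ g =>
      rw [← Filter.Germ.coe_smul, ← Filter.Germ.coe_mul, ← Filter.Germ.coe_mul,
        ← Filter.Germ.coe_smul, smul_mul_assoc])
    (fun r x y => by
      induction x using Filter.Germ.inductionOn with | _ f =>
      induction y using Filter.Germ.inductionOn with | _ g =>
      rw [← Filter.Germ.coe_smul, ← Filter.Germ.coe_mul, ← Filter.Germ.coe_mul,
        ← Filter.Germ.coe_smul, mul_smul_comm])

/-- The local ℂ-algebra `𝒪_n` of germs at `0` of holomorphic functions on `ℂⁿ`. -/
def Ogerm (n : ℕ) : Subalgebra ℂ (Filter.Germ (𝓝 (0 : Cn n)) ℂ) where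
  carrier := {G | ∃ g : Cn n → ℂ, AnalyticAt ℂ g 0 ∧ (g : Filter.Germ (𝓝 (0 : Cn n)) ℂ) = G}
  mul_mem' := by rintro _ _ ⟨g, hg, rfl⟩ ⟨h, hh, rfl⟩; exact ⟨g * h, hg.mul hh, rfl⟩
  add_mem' := by rintro _ _ ⟨g, hg, rfl⟩ ⟨h, hh, rfl⟩; exact ⟨g + h, hg.add hh, rfl⟩
  algebraMap_mem' := fun c => ⟨fun _ => c, analyticAt_const, by
    rw [Algebra.algebraMap_eq_smul_one, ← Filter.Germ.coe_one, ← Filter.Germ.coe_smul]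
    congr 1
    funext x
    simp⟩

/-- The ideal `⟨f⟩` of `𝒪_n` generated by the coordinate functions of `f`. -/
def coordIdeal {n p : ℕ} (f : Cn n → Cn p) : Ideal (Ogerm n) :=
  Ideal.span {G : Ogerm n | ∃ i : Fin p,
    (G : Filter.Germ (𝓝 (0 : Cn n)) ℂ) =
      ((fun x => f x i : Cn n → ℂ) : Filter.Germ (𝓝 (0 : Cn n)) ℂ)}

/-- The multiplicity `mult f = dim_ℂ 𝒪ₙ/⟨f⟩` of a map germ. -/
def multGerm {n p : ℕ} (f : Cn n → Cn p) : Cardinal :=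
  Module.rank ℂ (Ogerm n ⧸ coordIdeal f)

/-- `f` is a finite map germ: `dim_ℂ 𝒪ₙ/f^*(𝔪_p)𝒪ₙ < ∞`. -/
def FiniteGerm {n p : ℕ} (f : Cn n → Cn p) : Prop :=
  multGerm f < Cardinal.aleph0

/-- The generic degree `gd(f)`: the minimum of `dim_ℂ 𝒪ₙ/⟨π ∘ f⟩` over all surjective
linear projections `π : ℂⁿ⁺¹ → ℂⁿ`. -/
def gdGerm {n : ℕ} (f : Cn n → Cn (n+1)) : Cardinal :=
  sInf {c : Cardinal | ∃ π : Cn (n+1) →ₗ[ℂ] Cn n, Function.Surjective π ∧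
    c = multGerm (fun x => π (f x))}

/-- The tangent cone of `X` at `x`: all limits `v` of `tₖ • (xₖ - x)` with `xₖ ∈ X`,
`xₖ → x` and `tₖ ∈ ℂ`. -/
def tangentConeSet {E : Type*} [NormedAddCommGroup E] [NormedSpace ℂ E]
    (X : Set E) (x : E) : Set E :=
  {v | ∃ (xs : ℕ → E) (ts : ℕ → ℂ), (∀ k, xs k ∈ X) ∧
    Filter.Tendsto xs Filter.atTop (𝓝 x) ∧
    Filter.Tendsto (fun k => ts k • (xs k - x)) Filter.atTop (𝓝 v)}

lemma DifferentiableAt_finset_prod' {ι E : Type*} [NormedAddCommGroup E] [NormedSpace ℂ E]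
    (s : Finset ι) {F : ι → E → ℂ} {x : E} (h : ∀ i ∈ s, DifferentiableAt ℂ (F i) x) :
    DifferentiableAt ℂ (fun y => ∏ i ∈ s, F i y) x := by
  classical
  induction s using Finset.induction_on with
  | empty => simp
  | insert a s ha ih =>
    simp only [Finset.prod_insert ha]
    exact (h a (by simp)).fun_mul (ih fun i hi => h i (by simp [hi]))

lemma det_differentiableAt {n : ℕ} {F : Cn n → (Cn n →L[ℂ] Cn n)} {x : Cn n}
    (hF : DifferentiableAt ℂ F x) : DifferentiableAt ℂ (fun y => (F y).det) x := by
  have h : (fun y => (F y).det) = fun y => Matrix.det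
      (LinearMap.toMatrix (EuclideanSpace.basisFun (Fin n) ℂ).toBasis
        (EuclideanSpace.basisFun (Fin n) ℂ).toBasis (F y : Cn n →ₗ[ℂ] Cn n)) := by
    funext y
    rw [LinearMap.det_toMatrix]
  rw [h]
  simp only [Matrix.det_apply]
  refine DifferentiableAt.fun_sum fun σ _ => ?_
  refine DifferentiableAt.const_smul ?_ _
  refine DifferentiableAt_finset_prod' _ fun i _ => ?_
  simp only [LinearMap.toMatrix_apply]
  have h1 : DifferentiableAt ℂ (fun y => (F y) (EuclideanSpace.single i 1)) x :=
    hF.clm_apply (differentiableAt_const _)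
  have h2 := (EuclideanSpace.proj (𝕜 := ℂ) (σ i)).differentiableAt.comp x h1
  convert! h2 using 2
  simp

lemma open_mapping_aux {n : ℕ} (g : Cn n → Cn n) (r δ : ℝ) (hr : 0 < r)
    (hg : ∀ x ∈ Metric.closedBall (0 : Cn n) r, AnalyticAt ℂ g x)
    (hs : ∀ x ∈ Metric.sphere (0 : Cn n) r, δ ≤ ‖g x‖) (h0 : g 0 = 0)
    (hdet : (fderiv ℂ g 0).det ≠ 0) (y : Cn n) (hy : ‖y‖ < δ / 4) :
    ∃ x ∈ Metric.closedBall (0 : Cn n) r, g x = y := by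
  by_contra! hcon
  have hgc : ContinuousOn g (Metric.closedBall 0 r) :=
    fun x hx => (hg x hx).continuousAt.continuousWithinAt
  set J : Cn n → ℂ := fun x => (fderiv ℂ g x).det with hJ
  have hJd : ∀ x ∈ Metric.closedBall (0 : Cn n) r, DifferentiableAt ℂ J x := fun x hx =>
    det_differentiableAt (hg x hx).fderiv.differentiableAt
  have hJe : ∀ x ∈ Metric.closedBall (0 : Cn n) r, ∀ᶠ x' in 𝓝 x, DifferentiableAt ℂ J x' :=
    fun x hx => (hg x hx).eventually_analyticAt.mono fun x' h =>
      det_differentiableAt h.fderiv.differentiableAt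
  have hJc : ContinuousOn J (Metric.closedBall 0 r) :=
    fun x hx => (hJd x hx).continuousAt.continuousWithinAt
  -- the compact set of pairs
  let B : Set (Cn n × ℂ) := Metric.closedBall 0 r ×ˢ Metric.closedBall 0 2
  let K : Set (Cn n × ℂ) := {p ∈ B | g p.1 - (y - p.2 • y) = 0}
  have hBc : IsCompact B := (isCompact_closedBall _ _).prod (isCompact_closedBall _ _)
  have hKc : IsCompact K := by
    refine hBc.of_isClosed_subset ?_ (fun p hp => hp.1)
    have : ContinuousOn (fun p : Cn n × ℂ => g p.1 - (y - p.2 • y)) B := by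
      refine ContinuousOn.sub (hgc.comp continuousOn_fst fun p hp => hp.1) ?_
      fun_prop
    exact this.preimage_isClosed_of_isClosed hBc.isClosed (isClosed_singleton (x := (0 : Cn n)))
  have hK0 : ∀ p ∈ K, p.2 ≠ 0 := by
    rintro ⟨x, z⟩ ⟨⟨hx, -⟩, he⟩ (rfl : z = 0)
    exact hcon x hx (by simpa [sub_eq_zero] using he)
  have hmem : ((0 : Cn n), (1 : ℂ)) ∈ K := by
    refine ⟨⟨by simp [hr.le], by simp⟩, by simp [h0]⟩
  obtain ⟨M, hM⟩ := (isCompact_closedBall (0 : Cn n) r).exists_bound_of_continuousOn hJc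
  have key : ∀ k : ℕ, ‖J 0‖ * 2 ^ k ≤ M := by
    intro k
    let φ : Cn n × ℂ → ℂ := fun p => J p.1 / p.2 ^ k
    have hφc : ContinuousOn (fun p => ‖φ p‖) K := by
      refine ContinuousOn.norm (ContinuousOn.div
        (hJc.comp continuousOn_fst fun p hp => hp.1.1) (by fun_prop) ?_)
      intro p hp
      exact pow_ne_zero _ (hK0 p hp)
    obtain ⟨p0, hp0, hmax⟩ := hKc.exists_isMaxOn ⟨_, hmem⟩ hφc
    let K' : Set (Cn n × ℂ) := {p ∈ K | ‖φ p‖ = ‖φ p0‖}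
    have hK'c : IsCompact K' := hKc.of_isClosed_subset
      (hφc.preimage_isClosed_of_isClosed hKc.isClosed (isClosed_singleton (x := ‖φ p0‖)))
      (fun p hp => hp.1)
    obtain ⟨⟨x, z⟩, ⟨hpK, hpv⟩, hmaxz⟩ := hK'c.exists_isMaxOn (f := fun p => ‖p.2‖)
      ⟨p0, hp0, rfl⟩ (by fun_prop)
    have hle : ‖J 0‖ ≤ ‖φ (x, z)‖ := by
      rw [hpv]
      have := hmax hmem
      simpa [φ] using this
    have hz0 := hK0 _ hpK
    simp only at hz0
    have hxb := hpK.1.1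
    have hzb := hpK.1.2
    simp only [Metric.mem_closedBall, dist_zero_right] at hzb
    have hgx : g x = y - z • y := by simpa [sub_eq_zero] using hpK.2
    have hz2 : ‖z‖ = 2 := by
      by_contra hne
      have hzlt : ‖z‖ < 2 := lt_of_le_of_ne hzb hne
      have hJx : J x ≠ 0 := by
        intro h
        have : ‖φ (x, z)‖ = 0 := by simp [φ, h]
        rw [this] at hle
        exact hdet (norm_le_zero_iff.1 hle)
      have hxlt : ‖x‖ < r := by
        have hxb' : ‖x‖ ≤ r := by simpa using hxb
        refine lt_of_le_of_ne hxb' fun h => ?_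
        have h1 := hs x (by simpa using h)
        have h2 : ‖g x‖ ≤ ‖y‖ + ‖z‖ * ‖y‖ := by
          rw [hgx]; exact (norm_sub_le _ _).trans (by rw [norm_smul])
        nlinarith [norm_nonneg y, norm_nonneg z]
      let e : Cn n ≃L[ℂ] Cn n := (fderiv ℂ g x).toContinuousLinearEquivOfDetNeZero hJx
      have hcd : ContDiffAt ℂ 1 g x := (hg x hxb).contDiffAt
      have hfd : HasFDerivAt g (e : Cn n →L[ℂ] Cn n) x := by
        have := (hg x hxb).differentiableAt.hasFDerivAt
        convert! this using 1
      let s : Cn n → Cn n := hcd.localInverse hfd one_ne_zero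
      have hs1 : s (g x) = x := hcd.localInverse_apply_image hfd one_ne_zero
      have hs2 : ContDiffAt ℂ 1 s (g x) := hcd.to_localInverse hfd one_ne_zero
      have hs3 : ∀ᶠ w in 𝓝 (g x), g (s w) = w :=
        (hcd.hasStrictFDerivAt' hfd one_ne_zero).eventually_right_inverse
      have hsd : ∀ᶠ w in 𝓝 (g x), DifferentiableAt ℂ s w := by
        filter_upwards [hs2.eventually (by simp)] with w hw using hw.differentiableAt one_ne_zero
      have hl : Tendsto (fun ζ : ℂ => y - ζ • y) (𝓝 z) (𝓝 (g x)) := by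
        rw [hgx]
        exact Continuous.tendsto (by fun_prop) z
      have hsl : Tendsto (fun ζ : ℂ => s (y - ζ • y)) (𝓝 z) (𝓝 x) := by
        have h := hs2.continuousAt.tendsto
        rw [hs1] at h
        exact h.comp hl
      let ψ : ℂ → ℂ := fun ζ => φ (s (y - ζ • y), ζ)
      have hψz : ψ z = φ (x, z) := by simp only [ψ]; rw [← hgx, hs1]
      have hψK : ∀ᶠ ζ in 𝓝 z, (s (y - ζ • y), ζ) ∈ K := by
        have h1 : ∀ᶠ x' in 𝓝 x, ‖x'‖ < r := continuous_norm.continuousAt.eventually_lt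
          continuousAt_const hxlt
        have h2 : ∀ᶠ ζ in 𝓝 z, ‖ζ‖ < 2 := continuous_norm.continuousAt.eventually_lt
          continuousAt_const hzlt
        filter_upwards [hsl.eventually h1, h2, hl.eventually hs3] with ζ a b c
        refine ⟨⟨by simpa using a.le, by simpa using b.le⟩, ?_⟩
        simp only [c, sub_self]
      have hψd : ∀ᶠ ζ in 𝓝 z, DifferentiableAt ℂ ψ ζ := by
        filter_upwards [hψK, hl.eventually hsd] with ζ a b
        have h1 : DifferentiableAt ℂ (fun ζ : ℂ => s (y - ζ • y)) ζ :=
          DifferentiableAt.comp ζ (g := s) b (by fun_prop)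
        have h2 : DifferentiableAt ℂ (fun ζ : ℂ => J (s (y - ζ • y))) ζ :=
          DifferentiableAt.comp ζ (g := J) (hJd _ a.1.1) h1
        exact h2.fun_div (by fun_prop) (pow_ne_zero _ (hK0 _ a))
      have hψm : IsLocalMax (norm ∘ ψ) z := by
        filter_upwards [hψK] with ζ a
        simp only [Function.comp, hψz, hpv]
        exact hmax a
      have hconst := Complex.norm_eventually_eq_of_isLocalMax hψd hψm
      have hall : ∀ᶠ ζ in 𝓝 z, ‖ζ‖ ≤ ‖z‖ := by
        filter_upwards [hconst, hψK] with ζ a b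
        exact hmaxz (show (s (y - ζ • y), ζ) ∈ K' from ⟨b, by rw [← hpv, ← hψz]; exact a⟩)
      have ht : Tendsto (fun t : ℝ => ((1 + t : ℝ) : ℂ) * z) (𝓝[>] 0) (𝓝 z) := by
        have : Tendsto (fun t : ℝ => ((1 + t : ℝ) : ℂ) * z) (𝓝 0) (𝓝 (((1 + 0 : ℝ) : ℂ) * z)) :=
          Continuous.tendsto (by fun_prop) 0
        simp only [add_zero, Complex.ofReal_one, one_mul] at this
        exact this.mono_left nhdsWithin_le_nhds
      obtain ⟨t, ht1, ht2⟩ := ((ht.eventually hall).and self_mem_nhdsWithin).exists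
      have ht2' : 0 < t := ht2
      rw [norm_mul, Complex.norm_real, Real.norm_of_nonneg (by linarith)] at ht1
      have := norm_pos_iff.2 hz0
      nlinarith
    have h3 : ‖φ (x, z)‖ * 2 ^ k = ‖J x‖ := by
      simp only [φ, norm_div, norm_pow, hz2]
      field_simp
    calc ‖J 0‖ * 2 ^ k ≤ ‖φ (x, z)‖ * 2 ^ k := by gcongr
      _ = ‖J x‖ := h3
      _ ≤ M := hM x hxb
  have hpos : 0 < ‖J 0‖ := norm_pos_iff.2 hdet
  obtain ⟨k, hk⟩ := pow_unbounded_of_one_lt (M / ‖J 0‖) (one_lt_two)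
  have := key k
  rw [div_lt_iff₀ hpos] at hk
  linarith

lemma open_mapping {n : ℕ} (g : Cn n → Cn n) (r δ : ℝ) (hr : 0 < r) (hδ : 0 < δ)
    (hg : ∀ x ∈ Metric.closedBall (0 : Cn n) r, AnalyticAt ℂ g x)
    (hs : ∀ x ∈ Metric.sphere (0 : Cn n) r, δ ≤ ‖g x‖) (h0 : g 0 = 0)
    (y : Cn n) (hy : ‖y‖ < δ / 8) :
    ∃ x ∈ Metric.closedBall (0 : Cn n) r, g x = y := by
  by_contra! hcon
  have hgc : ContinuousOn g (Metric.closedBall 0 r) :=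
    fun x hx => (hg x hx).continuousAt.continuousWithinAt
  obtain ⟨x0, hx0, hmin⟩ := (isCompact_closedBall (0 : Cn n) r).exists_isMinOn
    ⟨0, by simp [hr.le]⟩ (f := fun x => ‖g x - y‖) (by fun_prop)
  set η := ‖g x0 - y‖ with hη
  have hηpos : 0 < η := norm_pos_iff.2 (sub_ne_zero.2 (hcon x0 hx0))
  -- choose a small parameter
  have hfin := Module.End.finite_hasEigenvalue (-(fderiv ℂ g 0 : Cn n →ₗ[ℂ] Cn n) : Module.End ℂ (Cn n))
  have hev : ∀ᶠ ε : ℂ in 𝓝[≠] 0, ¬ Module.End.HasEigenvalue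
      (-(fderiv ℂ g 0 : Cn n →ₗ[ℂ] Cn n) : Module.End ℂ (Cn n)) ε := by
    have := (hfin.subset (sdiff_subset (t := {(0 : ℂ)}))).isClosed.isOpen_compl.mem_nhds
      (x := (0 : ℂ)) (by simp)
    filter_upwards [nhdsWithin_le_nhds this, self_mem_nhdsWithin] with ε h1 h2 h3
    exact h1 ⟨h3, h2⟩
  have hsm : ∀ᶠ ε : ℂ in 𝓝[≠] 0, ‖ε‖ < min (η / r) (δ / 2 / r) := by
    refine nhdsWithin_le_nhds ?_
    have : Metric.ball (0 : ℂ) (min (η / r) (δ / 2 / r)) ∈ 𝓝 0 :=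
      Metric.ball_mem_nhds _ (by positivity)
    filter_upwards [this] with ε h using by simpa using h
  obtain ⟨ε, h1, h2⟩ := (hev.and hsm).exists
  rw [lt_min_iff, lt_div_iff₀ hr, lt_div_iff₀ hr] at h2
  have hga : ∀ x ∈ Metric.closedBall (0 : Cn n) r, AnalyticAt ℂ (fun x => g x + ε • x) x :=
    fun x hx => (hg x hx).fun_add (analyticAt_const.fun_smul analyticAt_id)
  have hle : ∀ x ∈ Metric.closedBall (0 : Cn n) r, ‖ε • x‖ ≤ ‖ε‖ * r := by
    intro x hx
    rw [norm_smul]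
    have : ‖x‖ ≤ r := by simpa using hx
    gcongr
  obtain ⟨x, hx, hxy⟩ := open_mapping_aux (fun x => g x + ε • x) r (δ / 2) hr hga
    (by
      intro x hx
      have a := hs x hx
      have b := hle x (Metric.sphere_subset_closedBall hx)
      have c := norm_le_add_norm_add (g x) (ε • x)
      linarith) (by simp [h0])
    (by
      have hd : fderiv ℂ (fun x => g x + ε • x) 0 = fderiv ℂ g 0 + ε • ContinuousLinearMap.id ℂ _ := by
        have := ((hg 0 (by simp [hr.le])).differentiableAt.hasFDerivAt).add
          ((hasFDerivAt_id (𝕜 := ℂ) (0 : Cn n)).const_smul ε)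
        exact this.fderiv
      rw [hd]
      intro hdet
      have hdet' : LinearMap.det (-(ε • (1 : Module.End ℂ (Cn n)) - -(fderiv ℂ g 0 : Cn n →ₗ[ℂ] Cn n))) = 0 → False := by
        intro h
        apply h1
        have h' := LinearMap.bot_lt_ker_of_det_eq_zero h
        obtain ⟨v, hv, hv0⟩ := Submodule.exists_mem_ne_zero_of_ne_bot h'.ne'
        refine Module.End.hasEigenvalue_of_hasEigenvector (x := v)
          ⟨Module.End.mem_eigenspace_iff.2 ?_, hv0⟩
        rw [LinearMap.mem_ker] at hv
        simp only [LinearMap.neg_apply, LinearMap.sub_apply, LinearMap.smul_apply,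
          Module.End.one_apply, neg_eq_zero, sub_eq_zero] at hv
        exact hv.symm
      apply hdet'
      rw [← neg_one_smul ℂ, LinearMap.det_smul]
      have : (ε • (1 : Module.End ℂ (Cn n)) - -(fderiv ℂ g 0 : Cn n →ₗ[ℂ] Cn n)) =
        ((fderiv ℂ g 0 + ε • ContinuousLinearMap.id ℂ _ : Cn n →L[ℂ] Cn n) : Cn n →ₗ[ℂ] Cn n) := by
        ext v; simp [add_comm]
      rw [this]
      exact mul_eq_zero_of_right _ hdet) y (by linarith)
  have a : η ≤ ‖g x - y‖ := hmin hx
  have b := hle x hx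
  have c : g x - y = -(ε • x) := by rw [← hxy]; abel
  rw [c, norm_neg] at a
  linarith

lemma mem_coordIdeal_exists {n p : ℕ} (g : Cn n → Cn p) (G : Ogerm n) (hG : G ∈ coordIdeal g) :
    ∃ a : Fin p → Cn n → ℂ, (∀ j, AnalyticAt ℂ (a j) 0) ∧
      (G : Filter.Germ (𝓝 (0 : Cn n)) ℂ) =
        ((fun x => ∑ j, a j x * g x j : Cn n → ℂ) : Filter.Germ (𝓝 (0 : Cn n)) ℂ) := by
  classical
  unfold coordIdeal at hG
  induction hG using Submodule.span_induction with
  | mem G hG =>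
    obtain ⟨i, hi⟩ := hG
    refine ⟨fun j _ => if j = i then 1 else 0, fun j => analyticAt_const, ?_⟩
    rw [hi]
    congr 1
    funext x
    simp
  | zero =>
    refine ⟨fun _ _ => 0, fun j => analyticAt_const, ?_⟩
    simp only [zero_mul, Finset.sum_const_zero]
    rfl
  | add G H _ _ ihG ihH =>
    obtain ⟨a, ha, haG⟩ := ihG
    obtain ⟨b, hb, hbH⟩ := ihH
    refine ⟨fun j => a j + b j, fun j => (ha j).add (hb j), ?_⟩
    rw [Subalgebra.coe_add, haG, hbH, ← Filter.Germ.coe_add]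
    congr 1
    funext x
    simp [add_mul, Finset.sum_add_distrib]
  | smul c G _ ihG =>
    obtain ⟨a, ha, haG⟩ := ihG
    obtain ⟨⟨γ, hγ, hγc⟩⟩ := (⟨c.2⟩ : Nonempty _)
    refine ⟨fun j => γ * a j, fun j => hγ.mul (ha j), ?_⟩
    rw [smul_eq_mul, Subalgebra.coe_mul, haG, ← hγc, ← Filter.Germ.coe_mul]
    congr 1
    funext x
    simp [Finset.mul_sum, mul_assoc]

/-- The germ of an analytic function. -/
def mkO {n : ℕ} (g : Cn n → ℂ) (hg : AnalyticAt ℂ g 0) : Ogerm n := ⟨g, g, hg, rfl⟩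

lemma coord_analytic {n p : ℕ} {f : Cn n → Cn p} {x : Cn n} (hf : AnalyticAt ℂ f x) (i : Fin p) :
    AnalyticAt ℂ (fun x => f x i) x :=
  ((EuclideanSpace.proj (𝕜 := ℂ) (ι := Fin p) i).analyticAt _).comp hf

lemma coordIdeal_comp_le {n p q : ℕ} (f : Cn n → Cn p) (hf : AnalyticAt ℂ f 0)
    (π : Cn p →ₗ[ℂ] Cn q) : coordIdeal (fun x => π (f x)) ≤ coordIdeal f := by
  classical
  refine Ideal.span_le.2 ?_
  rintro G ⟨i, hi⟩
  have hG : G = ∑ j, (π (EuclideanSpace.single j 1) i) • mkO (fun x => f x j) (coord_analytic hf j) := by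
    apply Subtype.ext
    rw [hi]
    have h1 : (fun x => π (f x) i) = ∑ j, (π (EuclideanSpace.single j 1) i) • (fun x => f x j) := by
      funext x
      have h2 : f x = ∑ j, (f x j) • EuclideanSpace.single j (1 : ℂ) := by
        ext k
        simp [Finset.sum_apply, Pi.single_apply]
      conv_lhs => rw [h2]
      simp [map_sum, Finset.sum_apply, mul_comm]
    rw [h1]
    have h3 : ∀ (s : Finset (Fin p)),
        ((∑ j ∈ s, (π (EuclideanSpace.single j 1) i) • (fun x => f x j) : Cn n → ℂ) :
          Filter.Germ (𝓝 (0 : Cn n)) ℂ) =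
        ((∑ j ∈ s, (π (EuclideanSpace.single j 1) i) •
          mkO (fun x => f x j) (coord_analytic hf j) : Ogerm n) :
            Filter.Germ (𝓝 (0 : Cn n)) ℂ) := by
      intro s
      induction s using Finset.induction_on with
      | empty => simp
      | insert a s ha ih =>
        rw [Finset.sum_insert ha, Finset.sum_insert ha, Filter.Germ.coe_add, ih]
        rfl
    exact h3 _
  rw [hG]
  refine Ideal.sum_mem _ fun j _ => ?_
  rw [Algebra.smul_def]
  exact Ideal.mul_mem_left _ _ (Ideal.subset_span ⟨j, rfl⟩)

lemma ideal_le_of_rank {R : Type*} [CommRing R] [Algebra ℂ R] (I J : Ideal R) (hle : J ≤ I)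
    (hfin : Module.rank ℂ (R ⧸ I) < Cardinal.aleph0)
    (heq : Module.rank ℂ (R ⧸ I) = Module.rank ℂ (R ⧸ J)) : I ≤ J := by
  have h1 : FiniteDimensional ℂ (R ⧸ I) := Module.rank_lt_aleph0_iff.1 hfin
  have h2 : FiniteDimensional ℂ (R ⧸ J) :=
    Module.rank_lt_aleph0_iff.1 (heq ▸ hfin)
  have hfr : Module.finrank ℂ (R ⧸ J) = Module.finrank ℂ (R ⧸ I) := by
    unfold Module.finrank; rw [heq]
  let φ : (R ⧸ J) →ₐ[ℂ] (R ⧸ I) := Ideal.Quotient.factorₐ ℂ hle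
  have hsurj : Function.Surjective φ.toLinearMap := by
    intro z
    obtain ⟨w, rfl⟩ := Ideal.Quotient.mk_surjective z
    exact ⟨Ideal.Quotient.mk _ w, rfl⟩
  have hinj := (LinearMap.injective_iff_surjective_of_finrank_eq_finrank hfr).2 hsurj
  intro G hG
  rw [← Ideal.Quotient.eq_zero_iff_mem] at hG ⊢
  apply hinj
  rw [map_zero]
  exact hG

lemma exists_poly_mem {R : Type*} [CommRing R] [Algebra ℂ R] (I : Ideal R)
    (hfin : Module.rank ℂ (R ⧸ I) < Cardinal.aleph0) (X : R) :
    ∃ P : Polynomial ℂ, P ≠ 0 ∧ Polynomial.aeval X P ∈ I := by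
  have h1 : FiniteDimensional ℂ (R ⧸ I) := Module.rank_lt_aleph0_iff.1 hfin
  obtain ⟨P, hP0, hP⟩ := Algebra.IsAlgebraic.isAlgebraic (R := ℂ) (Ideal.Quotient.mk I X)
  refine ⟨P, hP0, ?_⟩
  rw [← Ideal.Quotient.eq_zero_iff_mem, ← hP]
  exact (Polynomial.aeval_algHom_apply (Ideal.Quotient.mkₐ ℂ I) X P).symm

lemma coordIdeal_le_of_rank {n p q : ℕ} (f : Cn n → Cn p) (g : Cn n → Cn q)
    (hle : coordIdeal g ≤ coordIdeal f) (hfin : multGerm f < Cardinal.aleph0)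
    (heq : multGerm f = multGerm g) : coordIdeal f ≤ coordIdeal g :=
  ideal_le_of_rank _ _ hle hfin heq

lemma exists_projection {n : ℕ} (f : Cn n → Cn (n+1)) (hfa : AnalyticAt ℂ f 0)
    (hfin : FiniteGerm f) (hmg : multGerm f = gdGerm f) :
    ∃ π : Cn (n+1) →ₗ[ℂ] Cn n, FiniteGerm (fun x => π (f x)) ∧
      coordIdeal f ≤ coordIdeal (fun x => π (f x)) := by
  have hne : {c : Cardinal | ∃ π : Cn (n+1) →ₗ[ℂ] Cn n, Function.Surjective π ∧
    c = multGerm (fun x => π (f x))}.Nonempty := by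
    obtain ⟨π, hπ⟩ : ∃ π : Cn (n+1) →ₗ[ℂ] Cn n, Function.Surjective π := by
      refine ⟨Matrix.toEuclideanLin (Matrix.of fun i j => if j = Fin.castSucc i then 1 else 0), ?_⟩
      intro w
      refine ⟨WithLp.toLp 2 (fun j => if h : j.1 < n then w ⟨j.1, h⟩ else 0), ?_⟩
      ext i
      simp only [Matrix.toLpLin_apply, Matrix.mulVec, dotProduct, Matrix.of_apply, ite_mul,
        one_mul, zero_mul, Finset.sum_ite_eq', Finset.mem_univ, if_true]
      simp
    exact ⟨_, π, hπ, rfl⟩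
  obtain ⟨π, -, hπ⟩ := csInf_mem hne
  have heq : multGerm f = multGerm (fun x => π (f x)) := hmg.trans hπ
  refine ⟨π, ?_, coordIdeal_le_of_rank f _ (coordIdeal_comp_le f hfa π) hfin heq⟩
  unfold FiniteGerm
  rw [← heq]
  exact hfin

lemma tendsto_clm_apply' {E F : Type*} [NormedAddCommGroup E] [NormedSpace ℂ E]
    [NormedAddCommGroup F] [NormedSpace ℂ F] {T : ℕ → E →L[ℂ] F} {T0 : E →L[ℂ] F}
    {w : ℕ → E} {w0 : E} (hT : Tendsto T atTop (𝓝 T0)) (hw : Tendsto w atTop (𝓝 w0)) :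
    Tendsto (fun k => T k (w k)) atTop (𝓝 (T0 w0)) :=
  ((isBoundedBilinearMap_apply (𝕜 := ℂ) (E := E) (F := F)).continuous.tendsto
    (T0, w0)).comp (hT.prodMk_nhds hw)

lemma aeval_germ {n : ℕ} (i : Fin n) (P : Polynomial ℂ) :
    ((Polynomial.aeval (mkO (fun x : Cn n => x i)
      (coord_analytic (f := id) analyticAt_id i)) P : Ogerm n) :
        Filter.Germ (𝓝 (0 : Cn n)) ℂ) =
      ((fun x => P.eval (x i) : Cn n → ℂ) : Filter.Germ (𝓝 (0 : Cn n)) ℂ) := by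
  set X : Ogerm n := mkO (fun x : Cn n => x i) (coord_analytic (f := id) analyticAt_id i) with hX
  induction P using Polynomial.induction_on' with
  | add P Q hP hQ =>
    rw [map_add, Subalgebra.coe_add, hP, hQ, ← Filter.Germ.coe_add]
    congr 1
    funext x
    simp
  | monomial k c =>
    have hXe : (X : Filter.Germ (𝓝 (0 : Cn n)) ℂ) = ((fun x : Cn n => x i : Cn n → ℂ) :
      Filter.Germ (𝓝 (0 : Cn n)) ℂ) := rfl
    rw [Polynomial.aeval_monomial, ← Algebra.smul_def, Subalgebra.coe_smul, Subalgebra.coe_pow,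
      hXe, ← Filter.Germ.coe_pow, ← Filter.Germ.coe_smul]
    congr 1
    funext x
    simp

lemma isolated_zero {n p : ℕ} (g : Cn n → Cn p) (hfin : FiniteGerm g) :
    ∀ᶠ x in 𝓝 (0 : Cn n), g x = 0 → x = 0 := by
  have hi : ∀ i : Fin n, ∀ᶠ x in 𝓝 (0 : Cn n), g x = 0 → x i = 0 := by
    intro i
    let X : Ogerm n := mkO (fun x => x i) (coord_analytic (f := id) analyticAt_id i)
    obtain ⟨P, hP0, hmem⟩ := exists_poly_mem (coordIdeal g) hfin X
    obtain ⟨a, -, ha⟩ := mem_coordIdeal_exists g _ hmem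
    have hev : ((Polynomial.aeval X P : Ogerm n) : Filter.Germ (𝓝 (0 : Cn n)) ℂ) =
        ((fun x => P.eval (x i) : Cn n → ℂ) : Filter.Germ (𝓝 (0 : Cn n)) ℂ) := by
      exact aeval_germ i P
    rw [hev, Filter.Germ.coe_eq] at ha
    have hroots : ∀ᶠ z in 𝓝 (0 : ℂ), P.eval z = 0 → z = 0 := by
      have hf : ({z | P.IsRoot z} \ {0}).Finite :=
        (Polynomial.finite_setOfPred_isRoot hP0).subset sdiff_subset
      filter_upwards [hf.isClosed.isOpen_compl.mem_nhds (x := (0 : ℂ)) (by simp)] with z hz hz'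
      by_contra h
      exact hz ⟨hz', h⟩
    have hcont : Tendsto (fun x : Cn n => x i) (𝓝 0) (𝓝 0) := by
      have : Continuous (fun x : Cn n => x i) := by fun_prop
      exact this.tendsto 0
    filter_upwards [ha, hcont.eventually hroots] with x h2 h3 h4
    apply h3
    rw [h2]
    simp [h4]
  filter_upwards [eventually_all.2 hi] with x hx h
  ext i
  exact hx i h

/-- If `f : (ℂⁿ,0) → (ℂⁿ⁺¹,0)` is a finite holomorphic map germ with
`mult f = gd f`, then the tangent cone of the image at the origin is an `n`-dimensional
linear subspace (a hyperplane) of `ℂⁿ⁺¹`. -/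
theorem tangent_cone_of_image_is_hyperplane (n : ℕ) (f : Cn n → Cn (n+1))
    (hf0 : f 0 = 0) (hfa : AnalyticAt ℂ f 0) (hfin : FiniteGerm f)
    (hmg : multGerm f = gdGerm f) :
    ∃ U : Set (Cn n), IsOpen U ∧ 0 ∈ U ∧
      ∃ L : Submodule ℂ (Cn (n+1)), Module.finrank ℂ L = n ∧
        tangentConeSet (f '' U) 0 = (L : Set (Cn (n+1))) := by
  obtain ⟨π, hπfin, hπle⟩ := exists_projection f hfa hfin hmg
  set g : Cn n → Cn n := fun x => π (f x) with hgdef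
  let πc : Cn (n+1) →L[ℂ] Cn n := LinearMap.toContinuousLinearMap π
  have hga : AnalyticAt ℂ g 0 := (πc.analyticAt _).comp hfa
  have hg0 : g 0 = 0 := by simp [hgdef, hf0]
  have hcoef : ∀ i : Fin (n+1), ∃ a : Fin n → Cn n → ℂ, (∀ j, AnalyticAt ℂ (a j) 0) ∧
      ∀ᶠ x in 𝓝 (0 : Cn n), f x i = ∑ j, a j x * g x j := by
    intro i
    obtain ⟨a, ha, h⟩ := mem_coordIdeal_exists g
      (mkO (fun x => f x i) (coord_analytic hfa i)) (hπle (Ideal.subset_span ⟨i, rfl⟩))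
    exact ⟨a, ha, Filter.Germ.coe_eq.1 h⟩
  choose a ha hfa' using hcoef
  let A : Cn n → (Cn n →L[ℂ] Cn (n+1)) := fun x => ∑ i, ∑ j, a i j x •
    (EuclideanSpace.proj (𝕜 := ℂ) (ι := Fin n) j).smulRight
      (EuclideanSpace.single i (1 : ℂ))
  have hA : ContinuousAt A 0 := by
    refine tendsto_finsetSum _ fun i _ => tendsto_finsetSum _ fun j _ => ?_
    exact (ha i j).continuousAt.tendsto.smul_const _
  have hfA : ∀ᶠ x in 𝓝 (0 : Cn n), f x = A x (g x) := by
    filter_upwards [eventually_all.2 hfa'] with x hx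
    ext k
    rw [hx k]
    simp [A, Finset.sum_apply, Pi.single_apply]
  -- a good radius
  obtain ⟨r, hr, hball⟩ := Metric.nhds_basis_closedBall.eventually_iff.1
    (hga.eventually_analyticAt.and ((isolated_zero g hπfin).and hfA))
  have hsmall : ∀ s : ℝ, 0 < s → s ≤ r → ∃ δ > 0, ∀ y : Cn n, ‖y‖ < δ →
      ∃ x, ‖x‖ ≤ s ∧ g x = y := by
    intro s hs hsr
    have hsub : Metric.closedBall (0 : Cn n) s ⊆ Metric.closedBall 0 r :=
      Metric.closedBall_subset_closedBall hsr
    have hgs : ∀ x ∈ Metric.closedBall (0 : Cn n) s, AnalyticAt ℂ g x :=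
      fun x hx => (hball (hsub hx)).1
    obtain ⟨δ, hδ, hδs⟩ : ∃ δ > 0, ∀ x ∈ Metric.sphere (0 : Cn n) s, δ ≤ ‖g x‖ := by
      rcases (Metric.sphere (0 : Cn n) s).eq_empty_or_nonempty with he | hne
      · exact ⟨1, one_pos, by simp [he]⟩
      · obtain ⟨x0, hx0, hmin⟩ := (isCompact_sphere (0 : Cn n) s).exists_isMinOn hne
          (f := fun x => ‖g x‖) (fun x hx => (hgs x
            (Metric.sphere_subset_closedBall hx)).continuousAt.norm.continuousWithinAt)
        refine ⟨‖g x0‖, norm_pos_iff.2 fun h => ?_, fun x hx => hmin hx⟩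
        have := (hball (hsub (Metric.sphere_subset_closedBall hx0))).2.1 h
        rw [this] at hx0
        simp at hx0
        exact hs.ne hx0
    refine ⟨δ / 8, by positivity, fun y hy => ?_⟩
    obtain ⟨x, hx, hxy⟩ := open_mapping g s δ hs hδ hgs hδs hg0 y hy
    exact ⟨x, by simpa using hx, hxy⟩
  -- sequences in a prescribed direction
  have hseq : ∀ w : Cn n, ∃ (u : ℕ → Cn n) (t : ℕ → ℂ), (∀ k, ‖u k‖ < r) ∧
      Tendsto u atTop (𝓝 0) ∧ ∀ k, t k • g (u k) = w := by
    intro w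
    have hex : ∀ k : ℕ, ∃ (x : Cn n) (t : ℂ), ‖x‖ ≤ r / 2 / (k + 1) ∧ t • g x = w := by
      intro k
      obtain ⟨δ, hδ, h⟩ := hsmall (r / 2 / (k + 1)) (by positivity)
        ((div_le_self (by positivity) (by linarith [(Nat.cast_nonneg k : (0:ℝ) ≤ k)])).trans
          (by linarith))
      have hc : 0 < δ / (‖w‖ + 1) := by positivity
      obtain ⟨x, hx, hxw⟩ := h (((δ / (‖w‖ + 1) : ℝ) : ℂ) • w) (by
        rw [norm_smul, Complex.norm_real, Real.norm_of_nonneg hc.le, div_mul_eq_mul_div,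
          div_lt_iff₀ (by positivity)]
        nlinarith [norm_nonneg w])
      refine ⟨x, (((δ / (‖w‖ + 1) : ℝ) : ℂ))⁻¹, hx, ?_⟩
      rw [hxw, inv_smul_smul₀]
      exact_mod_cast hc.ne'
    choose u t hu ht using hex
    refine ⟨u, t, fun k => (hu k).trans_lt ?_, ?_, ht⟩
    · exact (div_le_self (by positivity)
        (by linarith [(Nat.cast_nonneg k : (0:ℝ) ≤ k)])).trans_lt (by linarith)
    · refine squeeze_zero_norm hu ?_
      have := (tendsto_one_div_add_atTop_nhds_zero_nat (𝕜 := ℝ)).const_mul (r / 2)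
      simpa [div_eq_mul_inv] using this
  have hballr : ∀ x : Cn n, ‖x‖ < r → f x = A x (g x) := fun x hx =>
    (hball (by simpa using hx.le)).2.2
  have hlim : ∀ (w : Cn n) (u : ℕ → Cn n) (t : ℕ → ℂ), (∀ k, ‖u k‖ < r) →
      Tendsto u atTop (𝓝 0) → Tendsto (fun k => t k • g (u k)) atTop (𝓝 w) →
      Tendsto (fun k => t k • f (u k)) atTop (𝓝 (A 0 w)) := by
    intro w u t hu hu0 ht
    have h1 : Tendsto (fun k => A (u k) (t k • g (u k))) atTop (𝓝 (A 0 w)) :=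
      tendsto_clm_apply' (hA.tendsto.comp hu0) ht
    refine h1.congr fun k => ?_
    rw [map_smul, hballr _ (hu k)]
  have hpiA : ∀ w, π (A 0 w) = w := by
    intro w
    obtain ⟨u, t, hu, hu0, ht⟩ := hseq w
    have h1 := hlim w u t hu hu0 (by simp only [ht]; exact tendsto_const_nhds)
    have h2 : Tendsto (fun k => π (t k • f (u k))) atTop (𝓝 (π (A 0 w))) :=
      (πc.continuous.tendsto _).comp h1
    have h3 : (fun k => π (t k • f (u k))) = fun _ => w := by
      funext k; rw [map_smul]; exact ht k
    rw [h3] at h2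
    exact tendsto_nhds_unique h2 tendsto_const_nhds
  have hinj : Function.Injective (A 0 : Cn n →ₗ[ℂ] Cn (n+1)) :=
    Function.LeftInverse.injective (g := π) hpiA
  refine ⟨Metric.ball 0 r, Metric.isOpen_ball, by simpa using hr,
    LinearMap.range (A 0 : Cn n →ₗ[ℂ] Cn (n+1)), ?_, ?_⟩
  · rw [LinearMap.finrank_range_of_inj hinj]
    simp
  · ext v
    constructor
    · rintro ⟨xs, ts, hxs, hx0, hv⟩
      choose u hu hux using hxs
      have hur : ∀ k, ‖u k‖ < r := fun k => by simpa using hu k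
      simp only [sub_zero] at hv
      have hgu : Tendsto (fun k => g (u k)) atTop (𝓝 0) := by
        have := (πc.continuous.tendsto 0).comp hx0
        rw [map_zero] at this
        refine this.congr fun k => ?_
        simp only [Function.comp, ← hux k]
        rfl
      have hu0 : Tendsto u atTop (𝓝 0) := by
        rw [Metric.tendsto_atTop]
        intro ε hε
        by_contra! hno
        have hc : IsCompact (Metric.closedBall (0 : Cn n) r \ Metric.ball 0 ε) :=
          (isCompact_closedBall _ _).diff Metric.isOpen_ball
        obtain ⟨k0, -, hk0⟩ := hno 0
        have hin : ∀ k, ε ≤ dist (u k) 0 →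
            u k ∈ Metric.closedBall (0 : Cn n) r \ Metric.ball 0 ε := fun k hk =>
          ⟨by simpa using (hur k).le, by simpa using hk⟩
        obtain ⟨x0, hx0m, hmin⟩ := hc.exists_isMinOn ⟨u k0, hin k0 hk0⟩
          (f := fun x => ‖g x‖) (fun x hx => (hball hx.1).1.continuousAt.norm.continuousWithinAt)
        have hpos : 0 < ‖g x0‖ := norm_pos_iff.2 fun h => by
          have := (hball hx0m.1).2.1 h
          exact hx0m.2 (by simpa [this] using hε)
        obtain ⟨N, hN⟩ := Metric.tendsto_atTop.1 hgu _ hpos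
        obtain ⟨k, hk, hk'⟩ := hno N
        have h1 := hN k hk
        rw [dist_zero_right] at h1
        exact absurd (hmin (hin k hk')) (not_le.2 h1)
      have hv' : Tendsto (fun k => ts k • f (u k)) atTop (𝓝 v) := by
        simpa only [hux] using hv
      have htg : Tendsto (fun k => ts k • g (u k)) atTop (𝓝 (π v)) := by
        refine ((πc.continuous.tendsto v).comp hv').congr fun k => ?_
        exact map_smul π _ _
      have := tendsto_nhds_unique hv' (hlim (π v) u ts hur hu0 htg)
      exact ⟨π v, this.symm⟩
    · rintro ⟨w, rfl⟩
      obtain ⟨u, t, hu, hu0, ht⟩ := hseq w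
      refine ⟨fun k => f (u k), t, fun k => ⟨u k, by simpa using hu k, rfl⟩, ?_, ?_⟩
      · have := hfa.continuousAt.tendsto.comp hu0
        rw [hf0] at this
        exact this
      · simp only [sub_zero]
        exact hlim w u t hu hu0 (by simp only [ht]; exact tendsto_const_nhds)
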